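/- arXiv:1509.07438 — 5 statements merged into one kernel-verified Lean document; each statement's English description precedes it below -/
import Mathlib

section
/- Let t ≥ 2 and h ≥ 4t²+10t+24 be integers, and for a ∈ {0,…,t} set ℓ_a = ⌈h/(t+a+1)⌉. Then for every p with 0 < p < 1, min( (1−p)/(ℓ_0−1), min_{a∈{1,…,t}} p(1−p)/(a(1−p)+(ℓ_a−1)p) ) = min( p(1−p)/(t(1−p)+(ℓ_t−1)p), (1−p)/(ℓ_0−1) ); that is, in the minimum over a ∈ {0,…,t} only the terms a = 0 and a = t are needed. -/
/-- Ceiling division of natural numbers: `⌈a/b⌉`. -/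
def ceilDiv (a b : ℕ) : ℕ := (a + b - 1) / b

theorem ceilDiv_lower (h b : ℕ) (hb : 0 < b) : (h : ℝ) ≤ (ceilDiv h b : ℝ) * b := by
  have h1 : h ≤ ceilDiv h b * b := by
    unfold ceilDiv
    have := Nat.div_add_mod (h + b - 1) b
    have h2 := Nat.mod_lt (h + b - 1) hb
    have h3 := Nat.mul_comm ((h + b - 1) / b) b
    omega
  exact_mod_cast h1

theorem ceilDiv_upper (h b : ℕ) : (ceilDiv h (b + 1) : ℝ) * (b + 1) ≤ h + b := by
  have h1 : ceilDiv h (b + 1) * (b + 1) ≤ h + b := Nat.div_mul_le_self _ _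
  exact_mod_cast h1

theorem chord_bound (t h a L0 La Lt : ℝ) (ht : 2 ≤ t) (hh : 4 * t ^ 2 + 10 * t + 24 ≤ h)
    (ha : 1 ≤ a) (hat : a ≤ t - 1)
    (h0 : h ≤ L0 * (t + 1)) (h2 : h ≤ Lt * (2 * t + 1)) (h1 : La * (t + a + 1) ≤ h + (t + a)) :
    t * La ≤ (t - a) * L0 + a * Lt := by
  have e1 : (t - 1) * h ≤ a * (t - a) * h := by
    apply mul_le_mul_of_nonneg_right _ (by nlinarith)
    nlinarith
  have e2 : (2 * t - 1) * ((t + 1) * (2 * t + 1)) ≤ (t - 1) * h := by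
    have := mul_le_mul_of_nonneg_left hh (by linarith : 0 ≤ t - 1)
    nlinarith
  have e3 : (t + a) * ((t + 1) * (2 * t + 1)) ≤ (2 * t - 1) * ((t + 1) * (2 * t + 1)) := by
    apply mul_le_mul_of_nonneg_right (by linarith) (by positivity)
  have e4 : t * ((t + a) * ((t + 1) * (2 * t + 1))) ≤ t * (a * (t - a) * h) :=
    mul_le_mul_of_nonneg_left (by linarith) (by linarith)
  have hM : 0 < (t + 1) * (t + a + 1) * (2 * t + 1) := by positivity
  have f1 := mul_le_mul_of_nonneg_left h1 (by positivity : 0 ≤ t * ((t + 1) * (2 * t + 1)))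
  have f0 := mul_le_mul_of_nonneg_left h0
    (mul_nonneg (by linarith : 0 ≤ t - a) (by positivity : 0 ≤ (t + a + 1) * (2 * t + 1)))
  have f2 := mul_le_mul_of_nonneg_left h2 (by positivity : 0 ≤ a * ((t + 1) * (t + a + 1)))
  refine le_of_mul_le_mul_right ?_ hM
  linarith

theorem stmt8 (t h : ℕ) (ht : 2 ≤ t) (hh : 4 * t ^ 2 + 10 * t + 24 ≤ h)
    (p : ℝ) (hp0 : 0 < p) (hp1 : p < 1) :
    min ((1 - p) / ((ceilDiv h (t + 1) : ℝ) - 1))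
      ((Finset.Icc 1 t).inf' (Finset.nonempty_Icc.mpr (by omega : 1 ≤ t))
        (fun a => p * (1 - p) / (a * (1 - p) + ((ceilDiv h (t + a + 1) : ℝ) - 1) * p)))
    = min (p * (1 - p) / (t * (1 - p) + ((ceilDiv h (2 * t + 1) : ℝ) - 1) * p))
        ((1 - p) / ((ceilDiv h (t + 1) : ℝ) - 1)) := by
  have htR : (2 : ℝ) ≤ t := by exact_mod_cast ht
  have hhR : 4 * (t : ℝ) ^ 2 + 10 * t + 24 ≤ h := by exact_mod_cast hh
  have hq : 0 < 1 - p := by linarith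
  have l0 := ceilDiv_lower h (t + 1) (by omega)
  have l2 := ceilDiv_lower h (2 * t + 1) (by omega)
  push_cast at l0 l2
  have hL0 : 0 < (ceilDiv h (t + 1) : ℝ) - 1 := by
    by_contra hc
    have : (ceilDiv h (t + 1) : ℝ) * (t + 1) ≤ 1 * (t + 1) :=
      mul_le_mul_of_nonneg_right (by linarith) (by positivity)
    nlinarith
  have hpos : ∀ b : ℕ, 0 < b → (0 : ℝ) ≤ (ceilDiv h b : ℝ) - 1 := by
    intro b hb
    have hl := ceilDiv_lower h b hb
    have : 0 < ceilDiv h b := by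
      rcases Nat.eq_zero_or_pos (ceilDiv h b) with h0 | h0
      · rw [h0] at hl
        push_cast at hl
        nlinarith
      · exact h0
    have : (1 : ℝ) ≤ ceilDiv h b := by exact_mod_cast this
    linarith
  have key : (1 - p) / ((ceilDiv h (t + 1) : ℝ) - 1)
      = p * (1 - p) / (((ceilDiv h (t + 1) : ℝ) - 1) * p) := by
    field_simp
  apply le_antisymm
  · rw [min_comm]
    apply min_le_min_right
    refine (Finset.inf'_le _ (Finset.mem_Icc.mpr ⟨by omega, le_refl t⟩)).trans (le_of_eq ?_)
    rw [two_mul]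
  · apply le_min (min_le_right _ _)
    apply Finset.le_inf'
    intro a ha
    obtain ⟨ha1, ha2⟩ := Finset.mem_Icc.mp ha
    rcases Nat.eq_or_lt_of_le ha2 with rfl | hlt
    · refine (min_le_left _ _).trans (le_of_eq ?_)
      rw [two_mul]
    · have haR : (1 : ℝ) ≤ a := by exact_mod_cast ha1
      have hatR : (a : ℝ) ≤ t - 1 := by
        have : (a : ℝ) + 1 ≤ t := by exact_mod_cast hlt
        linarith
      have l1 := ceilDiv_upper h (t + a)
      push_cast at l1
      have hc := chord_bound t h a _ _ _ htR hhR haR hatR l0 l2 l1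
      have hnum : 0 ≤ p * (1 - p) := by positivity
      have hDa : 0 < (a : ℝ) * (1 - p) + ((ceilDiv h (t + a + 1) : ℝ) - 1) * p := by
        have := mul_nonneg (hpos (t + a + 1) (by omega)) hp0.le
        have : 0 < (a : ℝ) * (1 - p) := by positivity
        linarith
      have hcp := mul_le_mul_of_nonneg_right hc hp0.le
      set D0 := ((ceilDiv h (t + 1) : ℝ) - 1) * p with hD0
      set Da := (a : ℝ) * (1 - p) + ((ceilDiv h (t + a + 1) : ℝ) - 1) * p with hDadef
      set Dt := (t : ℝ) * (1 - p) + ((ceilDiv h (2 * t + 1) : ℝ) - 1) * p with hDt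
      have hcomb : t * Da ≤ (t - a) * D0 + a * Dt := by
        rw [hD0, hDadef, hDt]
        linarith
      rw [key]
      by_cases hle : Da ≤ Dt
      · exact (min_le_left _ _).trans (div_le_div_of_nonneg_left hnum hDa hle)
      · refine (min_le_right _ _).trans (div_le_div_of_nonneg_left hnum hDa ?_)
        have g : (a : ℝ) * Dt ≤ a * Da :=
          mul_le_mul_of_nonneg_left (by linarith) (by linarith)
        have g2 : ((t : ℝ) - a) * Da ≤ (t - a) * D0 := by linarith
        exact le_of_mul_le_mul_left g2 (by linarith)
end

section
/- Let F be a connected finite simple graph on at least 3 vertices. Suppose there is a path P in F with the maximum number of vertices among all paths of F whose two endpoints are adjacent in F. Then F has a Hamiltonian cycle. -/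
theorem stmt16 {V : Type*} [Fintype V] [DecidableEq V] (F : SimpleGraph V) (hconn : F.Connected)
    (hcard : 3 ≤ Fintype.card V)
    (hex : ∃ (u v : V) (P : F.Walk u v), P.IsPath ∧ F.Adj u v ∧
      ∀ (x y : V) (Q : F.Walk x y), Q.IsPath → Q.length ≤ P.length) :
    ∃ (v : V) (c : F.Walk v v), c.IsHamiltonianCycle := by
  obtain ⟨u, v, P, hP, huv, hmax⟩ := hex
  have hall : ∀ w, w ∈ P.support := by
    by_contra! hw
    obtain ⟨w, hw⟩ := hw
    obtain ⟨R⟩ := hconn.preconnected u w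
    obtain ⟨d, -, ha, hb⟩ := R.exists_boundary_dart {x | x ∈ P.support} P.start_mem_support hw
    simp only [Set.mem_setOf_eq] at ha hb
    have hmem : d.fst ∈ (SimpleGraph.Walk.cons huv.symm P).support := by simp [ha]
    let C := (SimpleGraph.Walk.cons huv.symm P).rotate d.fst hmem
    have hnil : ¬ C.Nil := by simp [C]
    have hperm : C.tail.support.Perm P.support := by
      rw [C.support_tail_of_not_nil hnil]
      exact (SimpleGraph.Walk.support_rotate _ _ hmem).perm
    have hpath : C.tail.IsPath := SimpleGraph.Walk.IsPath.mk' (hperm.nodup_iff.mpr hP.support_nodup)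
    have h := hmax _ _ (C.tail.concat d.adj)
      ((SimpleGraph.Walk.concat_isPath_iff _).mpr ⟨hpath, fun h => hb (hperm.mem_iff.mp h)⟩)
    have hl := hperm.length_eq
    simp only [SimpleGraph.Walk.length_support] at hl
    rw [SimpleGraph.Walk.length_concat] at h
    omega
  have hlen := (hP.isHamiltonian_of_mem hall).length_eq
  refine ⟨v, SimpleGraph.Walk.cons huv.symm P,
    SimpleGraph.Walk.isHamiltonianCycle_iff_isCycle_and_length_eq.mpr ⟨?_, ?_⟩⟩
  · refine (SimpleGraph.Walk.cons_isCycle_iff _ _).mpr ⟨hP, fun h => ?_⟩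
    have := hP.length_eq_one_of_mem_edges (Sym2.eq_swap ▸ h)
    omega
  · rw [SimpleGraph.Walk.length_cons]
    omega
end

section
/- Fix integers t ≥ 1, h ≥ 2t+2 and a ∈ {0,…,t−1}, and set ℓ_a = ⌈h/(t+a+1)⌉ and ℓ_{a+1} = ⌈h/(t+a+2)⌉. Let F be a finite simple graph such that: F has no cycle with more than ℓ_a − 1 vertices; every vertex of F has degree at least ℓ_{a+1}; every pair of distinct vertices of F has at least one common neighbor; and no path of F with the maximum number of vertices has its two endpoints adjacent. Let v_1, v_2, …, v_ℓ be a path of F with the maximum number of vertices. Then v_1 and v_ℓ have exactly one common neighbor; this common neighbor equals v_c for some index c with 1 < c < ℓ; every neighbor of v_1 lies in {v_2,…,v_c}; and every neighbor of v_ℓ lies in {v_c,…,v_{ℓ−1}}. -/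
theorem aux_rot {V : Type*} (F : SimpleGraph V) (u v : V) (P : F.Walk u v) (hP : P.IsPath)
    (i j : ℕ) (hij : i < j) (hj : j ≤ P.length) (hv : F.Adj v (P.getVert i)) :
    ∃ Q : F.Walk u (P.getVert j), Q.IsPath ∧ Q.length = i + 1 + (P.length - j) := by
  refine ⟨(P.take i).append (SimpleGraph.Walk.cons hv.symm (P.drop j).reverse), ?_, ?_⟩
  · rw [SimpleGraph.Walk.isPath_def, SimpleGraph.Walk.support_append]
    simp only [SimpleGraph.Walk.support_cons, List.tail_cons]
    rw [List.nodup_append']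
    refine ⟨(hP.take i).support_nodup, (hP.drop j).reverse.support_nodup, ?_⟩
    intro x hx hy
    rw [SimpleGraph.Walk.support_reverse, List.mem_reverse] at hy
    obtain ⟨k, hk, hkl⟩ := SimpleGraph.Walk.mem_support_iff_exists_getVert.1 hx
    obtain ⟨l, hl, hll⟩ := SimpleGraph.Walk.mem_support_iff_exists_getVert.1 hy
    rw [SimpleGraph.Walk.take_getVert] at hk
    rw [SimpleGraph.Walk.drop_getVert] at hl
    rw [SimpleGraph.Walk.take_length] at hkl
    rw [SimpleGraph.Walk.drop_length] at hll
    have := hP.getVert_injOn (by simp; omega) (by simp; omega) (hk.trans hl.symm)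
    omega
  · simp [SimpleGraph.Walk.take_length, SimpleGraph.Walk.drop_length]
    omega

theorem aux_ceil (h m : ℕ) (hm : 1 ≤ m) (hh : 1 ≤ h) :
    ceilDiv h m ≤ 2 * ceilDiv h (m + 1) ∧ 1 ≤ ceilDiv h (m + 1) ∧ 1 ≤ ceilDiv h m := by
  unfold ceilDiv
  have h1 : 1 ≤ (h + (m + 1) - 1) / (m + 1) := by
    rw [Nat.le_div_iff_mul_le (by omega)]; omega
  have h3 : 1 ≤ (h + m - 1) / m := by
    rw [Nat.le_div_iff_mul_le (by omega)]; omega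
  refine ⟨?_, h1, h3⟩
  set q := (h + (m + 1) - 1) / (m + 1) with hq
  have h2 : h + (m + 1) - 1 < (m + 1) * (q + 1) := by
    rw [hq]; exact Nat.lt_mul_div_succ _ (by omega)
  rw [← Nat.lt_succ_iff, Nat.div_lt_iff_lt_mul (by omega)]
  have : q ≤ m * q := Nat.le_mul_of_pos_left _ (by omega)
  have e : (m+1) * (q+1) = m * q + m + q + 1 := by ring
  have e2 : (2 * q).succ * m = 2 * (m * q) + m := by rw [Nat.succ_eq_add_one]; ring
  omega

theorem aux_nbr {V : Type*} (F : SimpleGraph V) (u v : V) (P : F.Walk u v) (hP : P.IsPath)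
    (hmax : ∀ (x y : V) (Q : F.Walk x y), Q.IsPath → Q.length ≤ P.length)
    (w : V) (hw : F.Adj u w) : ∃ k, k ≤ P.length ∧ P.getVert k = w := by
  by_contra hcon
  have hns : w ∉ P.support := by
    intro hmem
    obtain ⟨k, hk, hkl⟩ := SimpleGraph.Walk.mem_support_iff_exists_getVert.1 hmem
    exact hcon ⟨k, hkl, hk⟩
  have := hmax _ _ (SimpleGraph.Walk.cons hw.symm P)
    ((SimpleGraph.Walk.cons_isPath_iff _ _).2 ⟨hP, hns⟩)
  simp at this

open Classical in
theorem aux_card {V : Type*} [Fintype V] (F : SimpleGraph V) (x : V) (n : ℕ) (p : ℕ → V)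
    (H : ∀ w, F.Adj x w → ∃ k, k ≤ n ∧ p k = w) :
    (F.neighborSet x).ncard ≤ ((Finset.range (n + 1)).filter (fun k => F.Adj x (p k))).card := by
  refine le_trans ?_ (Finset.card_image_le (f := p))
  rw [← Set.ncard_coe_finset]
  refine Set.ncard_le_ncard ?_ (Finset.finite_toSet _)
  intro w hw
  obtain ⟨k, hk, rfl⟩ := H w hw
  simp only [Finset.coe_image, Set.mem_image, Finset.mem_coe, Finset.mem_filter, Finset.mem_range]
  exact ⟨k, ⟨by omega, hw⟩, rfl⟩

theorem stmt17 {V : Type*} [Fintype V] (t h a : ℕ) (ht : 1 ≤ t)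
    (hh : 2 * t + 2 ≤ h) (ha : a < t)
    (F : SimpleGraph V)
    (hcyc : ∀ (x : V) (c : F.Walk x x), c.IsCycle →
      c.length ≤ ceilDiv h (t + a + 1) - 1)
    (hdeg : ∀ v : V, ceilDiv h (t + a + 2) ≤ (F.neighborSet v).ncard)
    (hcodeg : ∀ v w : V, v ≠ w → ∃ x, F.Adj v x ∧ F.Adj w x)
    (hnocycle : ∀ (x y : V) (Q : F.Walk x y), Q.IsPath →
      (∀ (x' y' : V) (R : F.Walk x' y'), R.IsPath → R.length ≤ Q.length) →
      ¬ F.Adj x y)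
    (u v : V) (P : F.Walk u v) (hP : P.IsPath)
    (hmax : ∀ (x y : V) (Q : F.Walk x y), Q.IsPath → Q.length ≤ P.length) :
    ∃ c : ℕ, 0 < c ∧ c < P.length ∧
      (∀ w : V, (F.Adj u w ∧ F.Adj v w) ↔ w = P.getVert c) ∧
      (∀ w : V, F.Adj u w → ∃ i, 1 ≤ i ∧ i ≤ c ∧ w = P.getVert i) ∧
      (∀ w : V, F.Adj v w → ∃ i, c ≤ i ∧ i ≤ P.length - 1 ∧ w = P.getVert i) := by
  classical
  obtain ⟨hc1, hc2, hc3⟩ := aux_ceil h (t + a + 1) (by omega) (by omega)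
  have hm : t + a + 1 + 1 = t + a + 2 := by omega
  rw [hm] at hc1 hc2
  have hU := aux_nbr F u v P hP hmax
  have hV : ∀ w, F.Adj v w → ∃ k, k ≤ P.length ∧ P.getVert k = w := by
    intro w hw
    obtain ⟨k, hk, hkw⟩ := aux_nbr F v u P.reverse hP.reverse (by simpa using hmax) w hw
    rw [SimpleGraph.Walk.getVert_reverse] at hkw
    exact ⟨_, by omega, hkw⟩
  have huv : ¬ F.Adj u v := hnocycle u v P hP hmax
  have hrot : ∀ k, F.Adj v (P.getVert k) → F.Adj u (P.getVert (k + 1)) →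
      k + 1 ≤ P.length → False := by
    intro k h1 h2 h3
    obtain ⟨Q, hQ, hQl⟩ := aux_rot F u v P hP k (k + 1) (by omega) h3 h1
    refine hnocycle _ _ Q hQ ?_ h2
    intro x y R hR
    have := hmax _ _ R hR
    omega
  have hcardU := (hdeg u).trans (aux_card F u _ _ hU)
  have hcardV := (hdeg v).trans (aux_card F v _ _ hV)
  have hnocross : ∀ d i j, j - i = d → i < j → j ≤ P.length → F.Adj v (P.getVert i) →
      F.Adj u (P.getVert j) → False := by
    intro d
    induction d using Nat.strong_induction_on with
    | _ d ih =>
    intro i j hd hij hj hvi huj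
    have hgapU : ∀ k, i < k → k < j → ¬ F.Adj u (P.getVert k) := fun k h1 h2 h3 =>
      ih (k - i) (by omega) i k rfl h1 (by omega) hvi h3
    have hgapV : ∀ k, i < k → k < j → ¬ F.Adj v (P.getVert k) := fun k h1 h2 h3 =>
      ih (j - k) (by omega) k j rfl h2 (by omega) h3 huj
    have hjn : j ≠ P.length := by
      rintro rfl
      rw [SimpleGraph.Walk.getVert_length] at huj
      exact huv huj
    obtain ⟨Q, hQ, hQl⟩ := aux_rot F u v P hP i j hij hj hvi
    have hcy : (SimpleGraph.Walk.cons huj.symm Q).IsCycle := by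
      rw [SimpleGraph.Walk.isCycle_iff_isPath_tail_and_le_length]
      refine ⟨by simpa using hQ, ?_⟩
      simp only [SimpleGraph.Walk.length_cons]
      omega
    have hlen := hcyc _ _ hcy
    rw [SimpleGraph.Walk.length_cons, hQl] at hlen
    set A := (Finset.range (P.length + 1)).filter (fun k => F.Adj u (P.getVert k)) with hA
    set B := (Finset.range (P.length + 1)).filter (fun k => F.Adj v (P.getVert k)) with hB
    have hBn : ∀ k ∈ B, k < P.length := by
      intro k hk
      simp only [hB, Finset.mem_filter, Finset.mem_range] at hk
      rcases Nat.lt_or_ge k P.length with h1 | h1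
      · exact h1
      · have : k = P.length := by omega
        subst this
        rw [SimpleGraph.Walk.getVert_length] at hk
        exact absurd hk.2 (F.loopless.irrefl v)
    have hB' : (B.image (· + 1)).card = B.card :=
      Finset.card_image_of_injective _ (add_left_injective 1)
    have hdis : Disjoint A (B.image (· + 1)) := by
      rw [Finset.disjoint_left]
      intro k hkA hkB
      obtain ⟨l, hl, rfl⟩ := Finset.mem_image.1 hkB
      have := hBn l hl
      exact hrot l (Finset.mem_filter.1 hl).2 (Finset.mem_filter.1 hkA).2 (by omega)
    have hsub : A ∪ B.image (· + 1) ⊆ Finset.Icc 1 (i + 1) ∪ Finset.Icc j P.length := by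
      intro k hk
      rw [Finset.mem_union, Finset.mem_Icc, Finset.mem_Icc]
      rcases Finset.mem_union.1 hk with hk | hk
      · obtain ⟨h1, h2⟩ := Finset.mem_filter.1 hk
        rw [Finset.mem_range] at h1
        have h0 : k ≠ 0 := by
          rintro rfl
          rw [SimpleGraph.Walk.getVert_zero] at h2
          exact F.loopless.irrefl u h2
        by_contra hcon
        exact hgapU k (by omega) (by omega) h2
      · obtain ⟨l, hl, rfl⟩ := Finset.mem_image.1 hk
        have h1 := hBn l hl
        have h2 := (Finset.mem_filter.1 hl).2
        by_contra hcon
        exact hgapV l (by omega) (by omega) h2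
    have hle := (Finset.card_le_card hsub).trans (Finset.card_union_le _ _)
    rw [Finset.card_union_of_disjoint hdis, hB', Nat.card_Icc, Nat.card_Icc] at hle
    omega
  have hne : u ≠ v := by
    rintro rfl
    have h0 : P.length = 0 := by
      have := SimpleGraph.Walk.isPath_iff_nil.1 hP
      exact SimpleGraph.Walk.nil_iff_length_eq.1 this
    obtain ⟨k, hk⟩ := Finset.card_pos.1 (lt_of_lt_of_le (Nat.lt_of_lt_of_le Nat.zero_lt_one hc2) hcardU)
    obtain ⟨h1, h2⟩ := Finset.mem_filter.1 hk
    rw [Finset.mem_range, h0] at h1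
    have : k = 0 := by omega
    subst this
    rw [SimpleGraph.Walk.getVert_zero] at h2
    exact F.loopless.irrefl u h2
  obtain ⟨x, hux, hvx⟩ := hcodeg u v hne
  obtain ⟨c, hc, rfl⟩ := hU x hux
  have hc0 : c ≠ 0 := by
    rintro rfl
    rw [SimpleGraph.Walk.getVert_zero] at hux
    exact F.loopless.irrefl u hux
  have hcn : c ≠ P.length := by
    rintro rfl
    rw [SimpleGraph.Walk.getVert_length] at hvx
    exact F.loopless.irrefl v hvx
  have hUc : ∀ w : V, F.Adj u w → ∃ i, 1 ≤ i ∧ i ≤ c ∧ w = P.getVert i := by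
    intro w hw
    obtain ⟨k, hk, rfl⟩ := hU w hw
    refine ⟨k, ?_, ?_, rfl⟩
    · rcases Nat.eq_zero_or_pos k with h0 | h0
      · subst h0
        rw [SimpleGraph.Walk.getVert_zero] at hw
        exact absurd hw (F.loopless.irrefl u)
      · exact h0
    · by_contra hcon
      exact hnocross _ c k rfl (by omega) hk hvx hw
  have hVc : ∀ w : V, F.Adj v w → ∃ i, c ≤ i ∧ i ≤ P.length - 1 ∧ w = P.getVert i := by
    intro w hw
    obtain ⟨k, hk, rfl⟩ := hV w hw
    refine ⟨k, ?_, ?_, rfl⟩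
    · by_contra hcon
      exact hnocross _ k c rfl (by omega) hc hw hux
    · by_contra hcon
      have : k = P.length := by omega
      subst this
      rw [SimpleGraph.Walk.getVert_length] at hw
      exact F.loopless.irrefl v hw
  refine ⟨c, by omega, by omega, ?_, hUc, hVc⟩
  intro w
  constructor
  · rintro ⟨h1, h2⟩
    obtain ⟨i, hi1, hi2, rfl⟩ := hUc w h1
    obtain ⟨k, hk1, hk2, hk⟩ := hVc _ h2
    have hik : i = k := hP.getVert_injOn (by simp; omega) (by simp; omega) hk
    have : i = c := by omega
    rw [this]
  · rintro rfl
    exact ⟨hux, hvx⟩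
end

section
/- Let h and t be positive integers, set ℓ_0 = ⌈h/(t+1)⌉, and let p be a real number with 1/2 ≤ p ≤ 1. (a) If h ≥ (t+1)²+1, then (1−p)/(ℓ_0−1) ≤ p/(t+1). (b) For each a ∈ {1,…,t}, if h ≥ (t+1)(t+a)+1, then (1−p)/(ℓ_0−1) ≤ p(1−p)/(a(1−p)+(ℓ_a−1)p), where ℓ_a = ⌈h/(t+a+1)⌉. -/
theorem ceilDiv_cast (h d : ℕ) (hh : 1 ≤ h) (hd : 1 ≤ d) :
    (ceilDiv h d : ℝ) - 1 = (((h - 1) / d : ℕ) : ℝ) := by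
  have : ceilDiv h d = (h - 1) / d + 1 := by
    unfold ceilDiv
    rw [show h + d - 1 = (h - 1) + d by omega, Nat.add_div_right _ (by omega)]
  rw [this]
  push_cast
  ring

theorem stmt18 (h t : ℕ) (hh : 1 ≤ h) (ht : 1 ≤ t) (p : ℝ)
    (hp : 1 / 2 ≤ p) (hp1 : p ≤ 1) :
    ((t + 1) ^ 2 + 1 ≤ h →
      (1 - p) / ((ceilDiv h (t + 1) : ℝ) - 1) ≤ p / (t + 1)) ∧
    (∀ a : ℕ, 1 ≤ a → a ≤ t → (t + 1) * (t + a) + 1 ≤ h →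
      (1 - p) / ((ceilDiv h (t + 1) : ℝ) - 1) ≤
        p * (1 - p) / (a * (1 - p) + ((ceilDiv h (t + a + 1) : ℝ) - 1) * p)) := by
  refine ⟨fun H => ?_, fun a ha hat H => ?_⟩
  · rw [ceilDiv_cast h (t + 1) hh (by omega)]
    have hm : t + 1 ≤ (h - 1) / (t + 1) := by
      rw [Nat.le_div_iff_mul_le (by omega)]
      have : (t + 1) * (t + 1) = (t + 1) ^ 2 := by ring
      omega
    have hm' : (t : ℝ) + 1 ≤ (((h - 1) / (t + 1) : ℕ) : ℝ) := by exact_mod_cast hm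
    have ht0 : (0 : ℝ) < (t : ℝ) + 1 := by positivity
    exact div_le_div₀ (by linarith) (by linarith) ht0 hm'
  · rw [ceilDiv_cast h (t + 1) hh (by omega), ceilDiv_cast h (t + a + 1) hh (by omega)]
    have hm : t + a ≤ (h - 1) / (t + 1) := by
      rw [Nat.le_div_iff_mul_le (by omega)]
      have : (t + a) * (t + 1) = (t + 1) * (t + a) := by ring
      omega
    have h1 : h - 1 < (t + 1) * ((h - 1) / (t + 1) + 1) :=
      Nat.lt_mul_div_succ _ (by omega)
    have h2 : (h - 1) / (t + a + 1) * (t + a + 1) ≤ h - 1 := Nat.div_mul_le_self _ _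
    generalize (h - 1) / (t + 1) = m at *
    generalize (h - 1) / (t + a + 1) = k at *
    have hk : a + k ≤ m := by
      by_contra hc
      have hc' : m + 1 ≤ a + k := by omega
      have h3 : k * (t + a + 1) < (t + 1) * (m + 1) := lt_of_le_of_lt h2 h1
      nlinarith [Nat.mul_le_mul_right (t + a + 1) hc', Nat.mul_le_mul_left a hm]
    have hk' : (a : ℝ) + k ≤ m := by exact_mod_cast hk
    have ha' : (1 : ℝ) ≤ a := by exact_mod_cast ha
    have hk0 : (0 : ℝ) ≤ k := Nat.cast_nonneg k
    rcases eq_or_lt_of_le hp1 with rfl | hlt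
    · simp
    · have hq : 0 < 1 - p := by linarith
      have hD : 0 < (a : ℝ) * (1 - p) + k * p := by positivity
      rw [div_le_div_iff₀ (by linarith) hD]
      have : (a : ℝ) * (1 - p) + k * p ≤ p * m := by nlinarith
      nlinarith
end

section
/- Let t ≥ 1 and h ≥ 2t+2 be integers, for a ∈ {0,…,t} set ℓ_a = ⌈h/(t+a+1)⌉, and set p_0 = 1/ℓ_t = 1/⌈h/(2t+1)⌉. Then for every real p with 0 < p ≤ p_0, min( p/(t+1), (1−p)/(ℓ_0−1), min_{a∈{1,…,t}} p(1−p)/(a(1−p)+(ℓ_a−1)p) ) = p/(t+1). -/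
lemma ceilDiv_le_of {h b m : ℕ} (hb : 0 < b) (H : h ≤ b * m) : ceilDiv h b ≤ m := by
  unfold ceilDiv
  apply Nat.le_of_lt_succ
  rw [Nat.div_lt_iff_lt_mul hb, Nat.succ_mul, Nat.mul_comm m b]
  omega

lemma le_mul_ceilDiv {h b : ℕ} (hb : 0 < b) : h ≤ b * ceilDiv h b := by
  unfold ceilDiv
  have h1 := Nat.div_add_mod (h + b - 1) b
  have h2 := Nat.mod_lt (h + b - 1) hb
  omega

lemma two_le_ceilDiv {h b : ℕ} (hb : 0 < b) (H : b < h) : 2 ≤ ceilDiv h b := by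
  by_contra hc
  have h1 : ceilDiv h b ≤ 1 := by omega
  have h2 := le_mul_ceilDiv (h := h) hb
  have := Nat.mul_le_mul_left b h1
  omega

lemma key_nat (t h a : ℕ) (ht : 1 ≤ t) (hh : 2 * t + 2 ≤ h) (ha : a ≤ t) :
    ceilDiv h (t + a + 1) ≤ 1 + (t - a + 1) * (ceilDiv h (2 * t + 1) - 1) := by
  have hL := two_le_ceilDiv (h := h) (b := 2 * t + 1) (by omega) (by omega)
  have hle := le_mul_ceilDiv (h := h) (b := 2 * t + 1) (by omega)
  generalize ceilDiv h (2 * t + 1) = L at *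
  obtain ⟨b, rfl⟩ := Nat.exists_eq_add_of_le ha
  obtain ⟨m, rfl⟩ := Nat.exists_eq_add_of_le hL
  have e1 : a + b - a = b := by omega
  have e2 : 2 + m - 1 = m + 1 := by omega
  rw [e1, e2]
  apply ceilDiv_le_of (by omega)
  refine hle.trans ?_
  rcases Nat.eq_zero_or_pos b with rfl | hb
  · nlinarith
  · obtain ⟨c, rfl⟩ := Nat.exists_eq_add_of_le hb
    ring_nf
    nlinarith [Nat.zero_le (a*c*m), Nat.zero_le (c*m), Nat.zero_le (a*m), Nat.zero_le (a*c), Nat.zero_le (c*c), Nat.zero_le (c*c*m)]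

lemma key_real (t h a : ℕ) (ht : 1 ≤ t) (hh : 2 * t + 2 ≤ h) (ha : a ≤ t) (p : ℝ)
    (hp0 : 0 < p) (hp : p ≤ 1 / (ceilDiv h (2 * t + 1) : ℝ)) :
    p < 1 ∧ ((ceilDiv h (t + a + 1) : ℝ) - 1) * p ≤ (t - a + 1) * (1 - p) := by
  have hL := two_le_ceilDiv (h := h) (b := 2 * t + 1) (by omega) (by omega)
  have hk := key_nat t h a ht hh ha
  generalize ceilDiv h (2 * t + 1) = L at *
  have hL' : (2 : ℝ) ≤ L := by exact_mod_cast hL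
  have hk' : (ceilDiv h (t + a + 1) : ℝ) ≤ 1 + (t - a + 1) * (L - 1) := by
    have : ((ceilDiv h (t + a + 1) : ℕ) : ℝ) ≤ ((1 + (t - a + 1) * (L - 1) : ℕ) : ℝ) := by
      exact_mod_cast hk
    rw [Nat.cast_add, Nat.cast_mul, Nat.cast_add, Nat.cast_sub ha,
      Nat.cast_sub (by omega : 1 ≤ L)] at this
    simpa using this
  have hpL : p * L ≤ 1 := by rwa [le_div_iff₀ (by linarith)] at hp
  have ha' : (a : ℝ) ≤ t := by exact_mod_cast ha
  refine ⟨by nlinarith, ?_⟩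
  calc _ ≤ ((t - a + 1) * (L - 1) : ℝ) * p := by
        apply mul_le_mul_of_nonneg_right _ hp0.le
        linarith
    _ = ((t : ℝ) - a + 1) * (p * L - p) := by ring
    _ ≤ _ := by
        apply mul_le_mul_of_nonneg_left _ (by linarith)
        linarith

theorem stmt19 (t h : ℕ) (ht : 1 ≤ t) (hh : 2 * t + 2 ≤ h) (p : ℝ)
    (hp0 : 0 < p) (hp : p ≤ 1 / (ceilDiv h (2 * t + 1) : ℝ)) :
    min (p / (t + 1))
      (min ((1 - p) / ((ceilDiv h (t + 1) : ℝ) - 1))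
        ((Finset.Icc 1 t).inf' (Finset.nonempty_Icc.mpr ht)
          (fun a => p * (1 - p) / (a * (1 - p) + ((ceilDiv h (t + a + 1) : ℝ) - 1) * p))))
    = p / (t + 1) := by
  have ht0 : (0 : ℝ) < t + 1 := by positivity
  apply min_eq_left
  apply le_min
  · obtain ⟨h1, h2⟩ := key_real t h 0 ht hh (by omega) p hp0 hp
    have h3 : (2 : ℝ) ≤ ceilDiv h (t + 1) := by
      exact_mod_cast two_le_ceilDiv (h := h) (b := t + 1) (by omega) (by omega)
    simp only [Nat.cast_zero, add_zero, sub_zero] at h2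
    rw [div_le_div_iff₀ ht0 (by linarith)]
    linarith
  · apply Finset.le_inf'
    intro a ha
    rw [Finset.mem_Icc] at ha
    obtain ⟨h1, h2⟩ := key_real t h a ht hh ha.2 p hp0 hp
    have h3 : (2 : ℝ) ≤ ceilDiv h (t + a + 1) := by
      exact_mod_cast two_le_ceilDiv (h := h) (b := t + a + 1) (by omega) (by omega)
    have h4 : 0 ≤ (a : ℝ) * (1 - p) := mul_nonneg (by positivity) (by linarith)
    have h5 : 0 < ((ceilDiv h (t + a + 1) : ℝ) - 1) * p := mul_pos (by linarith) hp0
    rw [div_le_div_iff₀ ht0 (by linarith), mul_assoc]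
    apply mul_le_mul_of_nonneg_left _ hp0.le
    linarith
end
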